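/- Let 4 ≤ p < q, n = p + q, and suppose 2p = q + 4. Every tree T ∈ 𝒯_n^{p,q} that is isomorphic to none of B_{p,q}^{0,0}, B_{p,q}^{0,1}, B_{p,q}^{2,0}, D_{p,q}^{0,1} satisfies T ≺_s D_{p,q}^{0,1}; that is, in this case D_{p,q}^{0,1} is the unique fourth last tree in the S-order among 𝒯_n^{p,q}. -/

import Mathlib

open SimpleGraph

open scoped Classical in
/-- The adjacency matrix of a simple graph, with real entries. -/
noncomputable def adjMat {V : Type*} [Fintype V] (G : SimpleGraph V) : Matrix V V ℝ :=
  Matrix.of fun a b => if G.Adj a b then 1 else 0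

/-- The `k`-th spectral moment `S_k(G) = tr(A(G)^k)`. -/
noncomputable def spectralMoment {V : Type*} [Fintype V] [DecidableEq V]
    (G : SimpleGraph V) (k : ℕ) : ℝ :=
  Matrix.trace (adjMat G ^ k)

/-- `SLt G₁ G₂` means `G₁ ≺_s G₂`: for some `k` with `1 ≤ k ≤ n - 1`,
`S_i(G₁) = S_i(G₂)` for all `i < k` and `S_k(G₁) < S_k(G₂)`. -/
def SLt {V : Type*} [Fintype V] [DecidableEq V] (G₁ G₂ : SimpleGraph V) : Prop :=
  ∃ k : ℕ, 1 ≤ k ∧ k ≤ Fintype.card V - 1 ∧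
    (∀ i < k, spectralMoment G₁ i = spectralMoment G₂ i) ∧
    spectralMoment G₁ k < spectralMoment G₂ k

/-- The tree `B_{p,q}^{k,l}` on `p + q` vertices: vertex `0 = u` is adjacent to `1 = v`
and to the `q - 1` vertices `2, …, q`; the distinguished neighbor `2` of `u` carries the
`k` pendant leaves `q+1, …, q+k`; the `l` neighbors `3, …, l+2` of `u` carry one pendant
leaf each (`q+k+j` is attached to `j+2` for `1 ≤ j ≤ l`); and `v` carries the
`p - k - l - 1` pendant leaves `q+k+l+1, …, p+q-1`. -/
def BTree (p q k l : ℕ) : SimpleGraph (Fin (p + q)) :=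
  SimpleGraph.fromRel (fun a b =>
    (a.val = 0 ∧ b.val = 1) ∨
    (a.val = 0 ∧ 2 ≤ b.val ∧ b.val ≤ q) ∨
    (a.val = 2 ∧ q + 1 ≤ b.val ∧ b.val ≤ q + k) ∨
    (q + k + 1 ≤ b.val ∧ b.val ≤ q + k + l ∧ a.val = b.val - (q + k) + 2) ∨
    (a.val = 1 ∧ q + k + l + 1 ≤ b.val))

/-- The tree `D_{p,q}^{k,l}` on `p + q` vertices: vertex `1 = v` is adjacent to `0 = u`
and to the `p - 1` vertices `2, …, p`; the distinguished neighbor `2` of `v` carries the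
`k` pendant leaves `p+1, …, p+k`; the `l` neighbors `3, …, l+2` of `v` carry one pendant
leaf each; and `u` carries the `q - k - l - 1` pendant leaves `p+k+l+1, …, p+q-1`. -/
def DTree (p q k l : ℕ) : SimpleGraph (Fin (p + q)) :=
  SimpleGraph.fromRel (fun a b =>
    (a.val = 0 ∧ b.val = 1) ∨
    (a.val = 1 ∧ 2 ≤ b.val ∧ b.val ≤ p) ∨
    (a.val = 2 ∧ p + 1 ≤ b.val ∧ b.val ≤ p + k) ∨
    (p + k + 1 ≤ b.val ∧ b.val ≤ p + k + l ∧ a.val = b.val - (p + k) + 2) ∨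
    (a.val = 0 ∧ p + k + l + 1 ≤ b.val))

/-- `T ∈ 𝒯_{p+q}^{p,q}`: `T` is a tree on `p + q` vertices with a `(p,q)`-bipartition. -/
def TreeBip (p q : ℕ) (G : SimpleGraph (Fin (p + q))) : Prop :=
  G.IsTree ∧ ∃ A : Finset (Fin (p + q)), A.card = p ∧
    ∀ ⦃x y : Fin (p + q)⦄, G.Adj x y → (x ∈ A ↔ y ∉ A)

open Finset

/-- Adjacency of the six vertex classes of a tree with two arms: class `0` is the centre, classes
`1` and `2` are two of its neighbours, and classes `3`, `4`, `5` are the leaves at `0`, `1`, `2`. -/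
def armRel (i j : Fin 6) : Prop :=
  (i, j) ∈ ([(0, 1), (0, 2), (0, 3), (1, 4), (2, 5), (1, 0), (2, 0), (3, 0), (4, 1), (5, 2)] :
    List (Fin 6 × Fin 6))

instance : DecidableRel armRel := fun i j => by unfold armRel; infer_instance

/-- `G` has a centre, two neighbours of it, and `a`, `b`, `c` leaves attached to these three. -/
def HasArms {V : Type*} [Fintype V] (G : SimpleGraph V) (a b c : ℕ) : Prop :=
  ∃ f : V → Fin 6, (∀ x y, G.Adj x y ↔ armRel (f x) (f y)) ∧
    ∀ k, #{x | f x = k} = ![1, 1, 1, a, b, c] k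

theorem exists_equiv_of_card_fiber_eq {V W κ : Type*} [Fintype V] [Fintype W] [DecidableEq κ]
    (f : V → κ) (g : W → κ) (h : ∀ k, #{x | f x = k} = #{x | g x = k}) :
    ∃ e : V ≃ W, ∀ x, g (e x) = f x := by
  have key : ∀ k, Nonempty ({x // f x = k} ≃ {x // g x = k}) := fun k => by
    refine Fintype.card_eq.1 ?_
    rw [Fintype.card_subtype, Fintype.card_subtype, h k]
  let E := fun k => (key k).some
  refine ⟨(Equiv.sigmaFiberEquiv f).symm.trans
    ((Equiv.sigmaCongrRight E).trans (Equiv.sigmaFiberEquiv g)), fun x => ?_⟩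
  exact (E (f x) ⟨x, rfl⟩).2

theorem HasArms.nonempty_iso {V W : Type*} [Fintype V] [Fintype W] {G : SimpleGraph V}
    {H : SimpleGraph W} {a b c : ℕ} (hG : HasArms G a b c) (hH : HasArms H a b c) :
    Nonempty (G ≃g H) := by
  obtain ⟨f, hf, hfc⟩ := hG
  obtain ⟨g, hg, hgc⟩ := hH
  obtain ⟨e, he⟩ := exists_equiv_of_card_fiber_eq f g fun k => (hfc k).trans (hgc k).symm
  exact ⟨⟨e, fun {x y} => by rw [hf, hg, he, he]⟩⟩

theorem card_filter_eq_of_iff_Ico {n a b : ℕ} {P : Fin n → Prop} [DecidablePred P] (hb : b ≤ n)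
    (h : ∀ i, P i ↔ a ≤ i.val ∧ i.val < b) : #{i | P i} = b - a := by
  rw [← Nat.card_Ico, ← Finset.card_map Fin.valEmbedding]
  congr 1
  ext x
  simp only [mem_map, mem_filter, mem_univ, true_and, Fin.valEmbedding_apply, mem_Ico, h]
  exact ⟨by rintro ⟨i, hi, rfl⟩; exact hi, fun hx => ⟨⟨x, by omega⟩, hx, rfl⟩⟩

/-- A tree with two arms whose centre and its neighbours are numbered `0, …, m`, followed by the
`c` leaves at the second arm and the leaves at the first arm. -/
theorem hasArms_of_numbering {n u v w m c : ℕ} {G : SimpleGraph (Fin n)} (huv : u ≠ v)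
    (huw : u ≠ w) (hvw : v ≠ w) (hu : u ≤ m) (hv : v ≤ m) (hw : w ≤ m) (hn : m + c < n)
    (hG : ∀ i j : Fin n, (i.val < j.val → (G.Adj i j ↔
      (i.val = u ∧ j.val ≤ m) ∨ (j.val = u ∧ i.val ≤ m) ∨
      (i.val = w ∧ m < j.val ∧ j.val ≤ m + c) ∨ (i.val = v ∧ m + c < j.val)))) :
    HasArms G (m - 2) (n - 1 - m - c) c := by
  let f : Fin n → Fin 6 := fun z => if z.val = u then 0 else if z.val = v then 1 else
    if z.val = w then 2 else if z.val ≤ m then 3 else if z.val ≤ m + c then 5 else 4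
  have hsymm : ∀ k l, armRel k l ↔ armRel l k := by decide
  have hirr : ∀ k, ¬ armRel k k := by decide
  have hlt : ∀ i j : Fin n, i.val < j.val → (G.Adj i j ↔ armRel (f i) (f j)) := by
    intro i j hij
    rw [hG i j hij]
    simp only [f]
    split_ifs <;> simp [armRel] <;> omega
  have hcard : ∀ k, k ≠ 3 → #{x | f x = k} = ![1, 1, 1, m - 2, n - 1 - m - c, c] k := by
    intro k hk
    fin_cases k
    · refine (card_filter_eq_of_iff_Ico (a := u) (b := u + 1) (by omega) fun i => ?_).trans ?_
      · simp only [f]; split_ifs <;> simp <;> omega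
      · simp
    · refine (card_filter_eq_of_iff_Ico (a := v) (b := v + 1) (by omega) fun i => ?_).trans ?_
      · simp only [f]; split_ifs <;> simp <;> omega
      · simp
    · refine (card_filter_eq_of_iff_Ico (a := w) (b := w + 1) (by omega) fun i => ?_).trans ?_
      · simp only [f]; split_ifs <;> simp <;> omega
      · simp
    · exact absurd rfl hk
    · refine (card_filter_eq_of_iff_Ico (a := m + c + 1) (b := n) le_rfl fun i => ?_).trans ?_
      · simp only [f]; split_ifs <;> simp <;> omega
      · simp
        omega
    · refine (card_filter_eq_of_iff_Ico (a := m + 1) (b := m + c + 1) hn fun i => ?_).trans ?_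
      · simp only [f]; split_ifs <;> simp <;> omega
      · simp
  refine ⟨f, fun x y => ?_, fun k => ?_⟩
  · rcases lt_trichotomy x y with hxy | rfl | hxy
    · exact hlt x y hxy
    · simp [hirr]
    · rw [G.adj_comm, hsymm]
      exact hlt y x hxy
  · by_cases hk : k = 3
    · subst hk
      have h := Finset.card_eq_sum_card_fiberwise (f := f) (s := univ) (t := univ)
        (fun _ _ => mem_coe.2 (mem_univ _))
      have h0 := hcard 0 (by decide)
      have h1 := hcard 1 (by decide)
      have h2 := hcard 2 (by decide)
      have h4 := hcard 4 (by decide)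
      have h5 := hcard 5 (by decide)
      rw [Fin.sum_univ_six, card_univ, Fintype.card_fin, h0, h1, h2, h4, h5] at h
      simp at h ⊢
      omega
    · exact hcard k hk

theorem hasArms_BTree_zero_zero {p q : ℕ} (hp : 1 ≤ p) (hq : 2 ≤ q) :
    HasArms (BTree p q 0 0) (q - 2) (p - 1) 0 := by
  have := hasArms_of_numbering (G := BTree p q 0 0) (u := 0) (v := 1) (w := 2) (m := q) (c := 0)
    (by omega) (by omega) (by omega) (by omega) (by omega) (by omega) (by omega)
    fun i j hij => by simp only [BTree, fromRel_adj, ne_eq, Fin.ext_iff]; omega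
  convert this using 1
  omega

theorem hasArms_BTree_zero_one {p q : ℕ} (hp : 2 ≤ p) (hq : 3 ≤ q) :
    HasArms (BTree p q 0 1) (q - 2) (p - 2) 1 := by
  have := hasArms_of_numbering (G := BTree p q 0 1) (u := 0) (v := 1) (w := 3) (m := q) (c := 1)
    (by omega) (by omega) (by omega) (by omega) (by omega) (by omega) (by omega)
    fun i j hij => by simp only [BTree, fromRel_adj, ne_eq, Fin.ext_iff]; omega
  convert this using 1
  omega

theorem hasArms_BTree_two_zero {p q : ℕ} (hp : 3 ≤ p) (hq : 2 ≤ q) :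
    HasArms (BTree p q 2 0) (q - 2) (p - 3) 2 := by
  have := hasArms_of_numbering (G := BTree p q 2 0) (u := 0) (v := 1) (w := 2) (m := q) (c := 2)
    (by omega) (by omega) (by omega) (by omega) (by omega) (by omega) (by omega)
    fun i j hij => by simp only [BTree, fromRel_adj, ne_eq, Fin.ext_iff]; omega
  convert this using 1
  omega

theorem hasArms_DTree_zero_one {p q : ℕ} (hp : 3 ≤ p) (hq : 2 ≤ q) :
    HasArms (DTree p q 0 1) (p - 2) (q - 2) 1 := by
  have := hasArms_of_numbering (G := DTree p q 0 1) (u := 1) (v := 0) (w := 3) (m := p) (c := 1)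
    (by omega) (by omega) (by omega) (by omega) (by omega) (by omega) (by omega)
    fun i j hij => by simp only [DTree, fromRel_adj, ne_eq, Fin.ext_iff]; omega
  convert this using 1
  omega

theorem HasArms.sum_comp_degree {V : Type*} [Fintype V] {G : SimpleGraph V}
    [DecidableRel G.Adj] {a b c : ℕ} (hG : HasArms G a b c) (φ : ℕ → ℕ) :
    ∑ v, φ (G.degree v) =
      φ (2 + a) + φ (1 + b) + φ (1 + c) + a * φ 1 + b * φ 1 + c * φ 1 := by
  obtain ⟨f, hf, hc⟩ := hG
  have hdeg : ∀ v, G.degree v = ∑ k, if armRel (f v) k then ![1, 1, 1, a, b, c] k else 0 := by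
    intro v
    rw [← card_neighborFinset_eq_degree, neighborFinset_eq_filter,
      Finset.card_eq_sum_card_fiberwise (f := f) (t := univ) (fun _ _ => mem_coe.2 (mem_univ _))]
    refine Finset.sum_congr rfl fun k _ => ?_
    rw [Finset.filter_filter, ← hc k]
    split_ifs with h
    · congr 1
      ext x
      simp only [mem_filter, mem_univ, true_and, hf]
      exact ⟨fun h => h.2, fun hx => ⟨hx ▸ h, hx⟩⟩
    · rw [Finset.card_eq_zero, Finset.filter_eq_empty_iff]
      rintro x - ⟨hx, rfl⟩
      exact h ((hf _ _).1 hx)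
  simp_rw [hdeg]
  rw [← Finset.sum_fiberwise univ f]
  have : ∀ k, ∑ v with f v = k, φ (∑ l, if armRel (f v) l then ![1, 1, 1, a, b, c] l else 0) =
      ![1, 1, 1, a, b, c] k * φ (∑ l, if armRel k l then ![1, 1, 1, a, b, c] l else 0) := by
    intro k
    rw [← hc k, ← smul_eq_mul, ← Finset.sum_const]
    refine Finset.sum_congr rfl fun v hv => ?_
    rw [(mem_filter.1 hv).2]
  simp_rw [this]
  simp [Fin.sum_univ_six, armRel]

section Moments

theorem adjMat_eq_adjMatrix {V : Type*} [Fintype V] (G : SimpleGraph V) [DecidableRel G.Adj] :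
    adjMat G = G.adjMatrix ℝ := by
  ext a b
  simp only [adjMat, Matrix.of_apply, adjMatrix_apply]
  congr

variable {V : Type*} [Fintype V] [DecidableEq V] (G : SimpleGraph V)

theorem spectralMoment_zero : spectralMoment G 0 = Fintype.card V := by
  simp [spectralMoment]

theorem spectralMoment_one : spectralMoment G 1 = 0 := by
  classical
  simp [spectralMoment, adjMat_eq_adjMatrix]

theorem spectralMoment_two [DecidableRel G.Adj] :
    spectralMoment G 2 = ((∑ v, G.degree v : ℕ) : ℝ) := by
  rw [spectralMoment, adjMat_eq_adjMatrix, pow_two, Matrix.trace]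
  push_cast
  exact Finset.sum_congr rfl fun v _ => by
    rw [Matrix.diag_apply, adjMatrix_mul_self_apply_self]

theorem spectralMoment_three (c : V → Prop) (hc : ∀ x y, G.Adj x y → (c x ↔ ¬ c y)) :
    spectralMoment G 3 = 0 := by
  classical
  rw [spectralMoment, adjMat_eq_adjMatrix, pow_succ, pow_two, Matrix.trace]
  refine Finset.sum_eq_zero fun x _ => ?_
  simp only [Matrix.diag_apply, Matrix.mul_apply, adjMatrix_apply]
  refine Finset.sum_eq_zero fun z _ => ?_
  rw [Finset.sum_mul]
  refine Finset.sum_eq_zero fun y _ => ?_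
  split_ifs with hxy hyz hzx <;> simp
  have := hc _ _ hxy
  have := hc _ _ hyz
  have := hc _ _ hzx
  tauto

theorem adjMatrix_mul_self_apply [DecidableRel G.Adj] (a b : V) :
    (G.adjMatrix ℝ * G.adjMatrix ℝ) a b = #(G.neighborFinset a ∩ G.neighborFinset b) := by
  rw [adjMatrix_mul_apply]
  simp only [adjMatrix_apply, Finset.sum_boole]
  congr 2
  ext c
  simp [G.adj_comm c b]

theorem spectralMoment_four [DecidableRel G.Adj] :
    spectralMoment G 4 =
      ((∑ a, ∑ b, #(G.neighborFinset a ∩ G.neighborFinset b) ^ 2 : ℕ) : ℝ) := by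
  rw [spectralMoment, adjMat_eq_adjMatrix, show 4 = 2 + 2 from rfl, pow_add, pow_two, Matrix.trace]
  push_cast
  refine Finset.sum_congr rfl fun a _ => ?_
  rw [Matrix.diag_apply, Matrix.mul_apply]
  refine Finset.sum_congr rfl fun b _ => ?_
  rw [adjMatrix_mul_self_apply, adjMatrix_mul_self_apply, Finset.inter_comm, pow_two]

theorem sum_card_neighborFinset_inter [DecidableRel G.Adj] :
    ∑ a, ∑ b, #(G.neighborFinset a ∩ G.neighborFinset b) = ∑ v, G.degree v ^ 2 := by
  have h : ∀ a b, #(G.neighborFinset a ∩ G.neighborFinset b) =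
      ∑ c, (if G.Adj c a then 1 else 0) * (if G.Adj c b then 1 else 0) := fun a b => by
    simp only [← ite_and, Finset.card_eq_sum_ones, ite_mul, one_mul, zero_mul]
    rw [← Finset.sum_filter]
    congr 1
    ext c
    simp [G.adj_comm c]
  have hd : ∀ c, G.degree c = ∑ a, if G.Adj c a then 1 else 0 := fun c => by
    rw [Finset.sum_boole, ← card_neighborFinset_eq_degree]
    simp [neighborFinset_eq_filter]
  simp_rw [h]
  rw [Finset.sum_congr rfl fun a _ => Finset.sum_comm, Finset.sum_comm]
  refine Finset.sum_congr rfl fun c _ => ?_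
  rw [hd, pow_two, Finset.sum_mul_sum]

theorem sum_add_ite_degree [DecidableRel G.Adj] :
    ∑ a, ∑ b, (#(G.neighborFinset a ∩ G.neighborFinset b) +
      if a = b then G.degree a ^ 2 - G.degree a else 0) + ∑ v, G.degree v =
      2 * ∑ v, G.degree v ^ 2 := by
  simp only [Finset.sum_add_distrib, Finset.sum_ite_eq, Finset.mem_univ, if_true]
  rw [sum_card_neighborFinset_inter, add_assoc, ← Finset.sum_add_distrib, two_mul]
  congr 1
  exact Finset.sum_congr rfl fun v _ => Nat.sub_add_cancel (Nat.le_self_pow two_ne_zero _)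

theorem two_mul_sum_degree_sq_le [DecidableRel G.Adj] :
    ((2 * ∑ v, G.degree v ^ 2 : ℕ) : ℝ) ≤ spectralMoment G 4 + (∑ v, G.degree v : ℕ) := by
  rw [spectralMoment_four, ← sum_add_ite_degree]
  norm_cast
  refine Nat.add_le_add_right (Finset.sum_le_sum fun a _ => Finset.sum_le_sum fun b _ => ?_) _
  split_ifs with hab
  · subst hab
    rw [inter_self, card_neighborFinset_eq_degree]
    exact (Nat.add_sub_cancel' (Nat.le_self_pow two_ne_zero _)).le
  · exact Nat.le_self_pow two_ne_zero _

variable {G}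

theorem SimpleGraph.IsAcyclic.card_neighborFinset_inter_le_one [DecidableRel G.Adj]
    (hG : G.IsAcyclic) {a b : V} (hab : a ≠ b) :
    #(G.neighborFinset a ∩ G.neighborFinset b) ≤ 1 := by
  refine Finset.card_le_one.2 fun c hc d hd => ?_
  simp only [mem_inter, mem_neighborFinset] at hc hd
  have key : ∀ e (h1 : G.Adj a e) (h2 : G.Adj b e),
      (Walk.cons h1 (Walk.cons h2.symm Walk.nil)).IsPath :=
    fun e h1 h2 => by simp [hab, h1.ne, h2.ne']
  have := (hG.subsingleton_path a b).elim ⟨_, key c hc.1 hc.2⟩ ⟨_, key d hd.1 hd.2⟩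
  simpa using congrArg (fun w => w.1.support) this

theorem SimpleGraph.IsAcyclic.spectralMoment_four_add [DecidableRel G.Adj]
    (hG : G.IsAcyclic) :
    spectralMoment G 4 + (∑ v, G.degree v : ℕ) = ((2 * ∑ v, G.degree v ^ 2 : ℕ) : ℝ) := by
  rw [spectralMoment_four, ← sum_add_ite_degree]
  norm_cast
  congr 1
  refine Finset.sum_congr rfl fun a _ => Finset.sum_congr rfl fun b _ => ?_
  split_ifs with hab
  · subst hab
    rw [inter_self, card_neighborFinset_eq_degree]
    exact (Nat.add_sub_cancel' (Nat.le_self_pow two_ne_zero _)).symm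
  · have := hG.card_neighborFinset_inter_le_one hab
    interval_cases #(G.neighborFinset a ∩ G.neighborFinset b) <;> rfl

theorem HasArms.spectralMoment_three {a b c : ℕ} (hG : HasArms G a b c) :
    spectralMoment G 3 = 0 := by
  obtain ⟨f, hf, -⟩ := hG
  refine _root_.spectralMoment_three G (fun x => f x = 0 ∨ f x = 4 ∨ f x = 5) fun x y hxy => ?_
  have : ∀ k l, armRel k l → ((k = 0 ∨ k = 4 ∨ k = 5) ↔ ¬ (l = 0 ∨ l = 4 ∨ l = 5)) := by decide
  exact this _ _ ((hf x y).1 hxy)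

end Moments

section SumSq

variable {ι : Type*} {s : Finset ι} {e : ι → ℕ} {N : ℕ}

theorem sum_sq_le_mul_of_le {m : ℕ} (hsum : ∑ i ∈ s, e i = N) (h : ∀ i ∈ s, e i ≤ m) :
    ∑ i ∈ s, e i ^ 2 ≤ m * N := by
  rw [← hsum, Finset.mul_sum]
  exact Finset.sum_le_sum fun i hi => by
    rw [pow_two]
    exact Nat.mul_le_mul_right _ (h i hi)

theorem sum_sq_lt_of_forall_ne (hsum : ∑ i ∈ s, e i = N) (hN : 2 ≤ N)
    (h : ∀ i ∈ s, e i ≠ N) (h1 : ∀ i ∈ s, e i ≠ N - 1) :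
    ∑ i ∈ s, e i ^ 2 < (N - 1) ^ 2 + 1 := by
  have := sum_sq_le_mul_of_le (m := N - 2) hsum fun i hi => by
    have : e i ≤ N := hsum ▸ Finset.single_le_sum (fun _ _ => Nat.zero_le _) hi
    have := h i hi
    have := h1 i hi
    omega
  refine this.trans_lt ?_
  obtain ⟨M, rfl⟩ := Nat.exists_eq_add_of_le' hN
  simp only [Nat.add_sub_cancel, show M + 2 - 1 = M + 1 from rfl]
  nlinarith

variable [DecidableEq ι]

theorem sum_erase_eq_sub {x : ι} (hsum : ∑ i ∈ s, e i = N) (hx : x ∈ s) :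
    ∑ i ∈ s.erase x, e i = N - e x := by
  rw [← hsum, ← Finset.add_sum_erase s e hx, Nat.add_sub_cancel_left]

theorem sum_sq_le_add_mul {m : ℕ} {x : ι} (hsum : ∑ i ∈ s, e i = N) (hx : x ∈ s)
    (h : ∀ i ∈ s, i ≠ x → e i ≤ m) :
    ∑ i ∈ s, e i ^ 2 ≤ e x ^ 2 + m * (N - e x) := by
  rw [← Finset.add_sum_erase s (fun i => e i ^ 2) hx]
  exact Nat.add_le_add_left (sum_sq_le_mul_of_le (sum_erase_eq_sub hsum hx)
    fun i hi => h i (mem_of_mem_erase hi) (ne_of_mem_erase hi)) _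

theorem add_le_of_sum_eq {x y : ι} (hsum : ∑ i ∈ s, e i = N) (hx : x ∈ s) (hy : y ∈ s)
    (hxy : x ≠ y) : e x + e y ≤ N := by
  rw [← hsum, ← Finset.add_sum_erase s e hx]
  exact Nat.add_le_add_left (Finset.single_le_sum (fun _ _ => Nat.zero_le _)
    (mem_erase.2 ⟨hxy.symm, hy⟩)) _

theorem eq_zero_of_sum_eq_add {x y i : ι} (hsum : ∑ i ∈ s, e i = N) (hx : x ∈ s) (hy : y ∈ s)
    (hxy : x ≠ y) (h : e x + e y = N) (hi : i ∈ s) (hix : i ≠ x) (hiy : i ≠ y) : e i = 0 := by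
  have := add_le_of_sum_eq (sum_erase_eq_sub hsum hx) (mem_erase.2 ⟨hxy.symm, hy⟩)
    (mem_erase.2 ⟨hix, hi⟩) hiy.symm
  omega

theorem exists_ne_pos_of_lt {x : ι} (hsum : ∑ i ∈ s, e i = N) (hx : x ∈ s) (h : e x < N) :
    ∃ y ∈ s, y ≠ x ∧ 0 < e y := by
  have h1 := sum_erase_eq_sub hsum hx
  obtain ⟨y, hy, hy0⟩ := Finset.exists_ne_zero_of_sum_ne_zero (s := s.erase x) (f := e) (by omega)
  exact ⟨y, mem_of_mem_erase hy, ne_of_mem_erase hy, Nat.pos_of_ne_zero hy0⟩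

theorem sum_sq_le_of_forall_ne (hN : 1 ≤ N) (hsum : ∑ i ∈ s, e i = N)
    (h : ∀ i ∈ s, e i ≠ N) : ∑ i ∈ s, e i ^ 2 ≤ (N - 1) ^ 2 + 1 := by
  have hle : ∀ i ∈ s, e i ≤ N := fun i hi =>
    hsum ▸ Finset.single_le_sum (fun _ _ => Nat.zero_le _) hi
  obtain ⟨M, rfl⟩ := Nat.exists_eq_add_of_le' hN
  by_cases hx : ∃ x ∈ s, e x = M
  · obtain ⟨x, hx, hxe⟩ := hx
    have := sum_sq_le_add_mul (m := 1) hsum hx fun i hi hix => by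
      have := add_le_of_sum_eq hsum hi hx hix
      omega
    rw [hxe] at this
    simpa using this
  · push Not at hx
    have := sum_sq_le_mul_of_le (m := M - 1) hsum fun i hi => by
      have := hle i hi
      have := h i hi
      have := hx i hi
      omega
    refine this.trans ?_
    rcases M with _ | M
    · simp
    · simp only [Nat.add_sub_cancel]
      nlinarith

theorem sum_sq_lt_of_forall_pair_ne (hN : 4 ≤ N) (hsum : ∑ i ∈ s, e i = N)
    (h0 : ∀ i ∈ s, e i ≠ N) (h1 : ∀ i ∈ s, e i ≠ N - 1)
    (h2 : ∀ i ∈ s, ∀ j ∈ s, i ≠ j → e i = N - 2 → e j ≠ 2) :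
    ∑ i ∈ s, e i ^ 2 < (N - 2) ^ 2 + 4 := by
  have hs : s.Nonempty := Finset.nonempty_of_sum_ne_zero (f := e) (by omega)
  obtain ⟨x, hx, hmax⟩ := Finset.exists_max_image s e hs
  have hle : e x ≤ N := hsum ▸ Finset.single_le_sum (fun _ _ => Nat.zero_le _) hx
  have hx0 := h0 x hx
  have hx1 := h1 x hx
  obtain ⟨M, rfl⟩ := Nat.exists_eq_add_of_le' hN
  simp only [show M + 4 - 1 = M + 3 from rfl, show M + 4 - 2 = M + 2 from rfl] at *
  rcases (by omega : e x = M + 2 ∨ e x ≤ 2 ∧ e x ≤ M + 1 ∨ 3 ≤ e x ∧ e x ≤ M + 1) with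
    hxe | ⟨hxe, hxM⟩ | ⟨hxe, hxM⟩
  · have := sum_sq_le_add_mul (m := 1) hsum hx fun i hi hix => by
      have := add_le_of_sum_eq hsum hi hx hix
      have := h2 x hx i hi hix.symm hxe
      omega
    rw [hxe] at this
    omega
  · have := sum_sq_le_mul_of_le hsum hmax
    rcases M with _ | M
    · have : e x * (0 + 4) ≤ 1 * (0 + 4) := Nat.mul_le_mul_right _ hxM
      omega
    · nlinarith
  · have := sum_sq_le_add_mul (m := M + 4 - e x) hsum hx fun i hi hix => by
      have := add_le_of_sum_eq hsum hi hx hix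
      omega
    obtain ⟨t, ht⟩ := Nat.exists_eq_add_of_le hxe
    obtain ⟨r, rfl⟩ := Nat.exists_eq_add_of_le (show t ≤ M by omega)
    rw [ht, show t + r + 4 - (3 + t) = r + 1 by omega] at this
    nlinarith

end SumSq

section Tree

theorem SimpleGraph.IsTree.sum_degree_sq {V : Type*} [Fintype V] [Nontrivial V]
    {G : SimpleGraph V} [DecidableRel G.Adj] (hG : G.IsTree) :
    ∑ v, G.degree v ^ 2 + Fintype.card V =
      ∑ v, (G.degree v - 1) ^ 2 + 2 * ∑ v, G.degree v := by
  have hpos := fun v => hG.connected.preconnected.degree_pos_of_nontrivial v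
  rw [← Finset.card_univ, Finset.card_eq_sum_ones, Finset.mul_sum, ← Finset.sum_add_distrib,
    ← Finset.sum_add_distrib]
  refine Finset.sum_congr rfl fun v _ => ?_
  obtain ⟨d, hd⟩ := Nat.exists_eq_add_of_le' (hpos v)
  rw [hd]
  simp only [Nat.add_sub_cancel]
  ring

variable {V : Type*} [Fintype V] [DecidableEq V] {G : SimpleGraph V} [DecidableRel G.Adj]
  {O : Finset V}

theorem hasArms_of_forall_adj {u x y : V} (hbip : ∀ ⦃s t⦄, G.Adj s t → (s ∈ O ↔ t ∉ O))
    (huO : u ∉ O) (hu : ∀ o ∈ O, G.Adj u o) (hx : x ∈ O) (hy : y ∈ O) (hxy : x ≠ y)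
    (hS : ∀ s ∉ O, s ≠ u → G.degree s = 1) (hO : ∀ o ∈ O, o ≠ x → o ≠ y → G.degree o = 1) :
    HasArms G (#O - 2) (G.degree x - 1) (G.degree y - 1) := by
  have hleaf : ∀ o ∈ O, o ≠ x → o ≠ y → ∀ t, G.Adj o t → t = u := by
    intro o ho hox hoy t hot
    obtain ⟨z, -, hz⟩ := degree_eq_one_iff_existsUnique_adj.1 (hO o ho hox hoy)
    rw [hz t hot, hz u (hu o ho).symm]
  have huniq : ∀ s ∉ O, s ≠ u → (G.Adj s x ↔ ¬ G.Adj s y) := by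
    intro s hs hsu
    obtain ⟨z, hsz, hz⟩ := degree_eq_one_iff_existsUnique_adj.1 (hS s hs hsu)
    have hzO : z ∈ O := by
      have := hbip hsz
      tauto
    constructor
    · intro h1 h2
      exact hxy ((hz x h1).trans (hz y h2).symm)
    · intro h2
      by_contra h1
      exact hsu (hleaf z hzO (fun h => h1 (h ▸ hsz)) (fun h => h2 (h ▸ hsz)) s hsz.symm)
  have hux : u ≠ x := fun h => huO (h ▸ hx)
  have huy : u ≠ y := fun h => huO (h ▸ hy)
  let f : V → Fin 6 := fun z => if z = u then 0 else if z = x then 1 else if z = y then 2 else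
    if z ∈ O then 3 else if G.Adj z x then 4 else 5
  have hsymm : ∀ k l, armRel k l ↔ armRel l k := by decide
  have hsame : ∀ s t, (s ∈ O ↔ t ∈ O) → ¬ G.Adj s t := fun s t h hst => by
    have := hbip hst
    tauto
  have hfO : ∀ s, (s ∈ O ↔ f s = 1 ∨ f s = 2 ∨ f s = 3) := by
    intro s
    simp only [f]
    split_ifs <;> simp_all
  have hsameRel : ∀ k l : Fin 6, ((k = 1 ∨ k = 2 ∨ k = 3) ↔ (l = 1 ∨ l = 2 ∨ l = 3)) →
      ¬ armRel k l := by decide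
  have hmain : ∀ s t, s ∉ O → t ∈ O → (G.Adj s t ↔ armRel (f s) (f t)) := by
    intro s t hs ht
    have htu : t ≠ u := fun h => huO (h ▸ ht)
    have hsx : s ≠ x := fun h => hs (h ▸ hx)
    have hsy : s ≠ y := fun h => hs (h ▸ hy)
    by_cases hsu : s = u
    · subst hsu
      simp only [f, hu t ht, htu, ht, if_true, if_false, true_iff]
      split_ifs <;> decide
    have h1 := huniq s hs hsu
    simp only [f, hs, hsu, hsx, hsy, htu, ht, if_true, if_false]
    by_cases htx : t = x
    · subst htx
      by_cases h : G.Adj s t <;> simp [h, armRel]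
    by_cases hty : t = y
    · subst hty
      by_cases h : G.Adj s t <;> simp [h1, h, hxy.symm, armRel]
    have : ¬ G.Adj s t := fun h => hsu (hleaf t ht htx hty s h.symm)
    simp only [htx, hty, this, if_false, false_iff]
    split_ifs <;> decide
  refine ⟨f, fun s t => ?_, fun k => ?_⟩
  · by_cases hs : s ∈ O <;> by_cases ht : t ∈ O
    · exact iff_of_false (hsame s t (by tauto)) (hsameRel _ _ (by rw [← hfO, ← hfO]; tauto))
    · rw [G.adj_comm, hsymm]
      exact hmain t s ht hs
    · exact hmain s t hs ht
    · exact iff_of_false (hsame s t (by tauto)) (hsameRel _ _ (by rw [← hfO, ← hfO]; tauto))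
  · clear hmain hsameRel hsymm hfO hleaf hS hO
    fin_cases k
    · refine Finset.card_eq_one.2 ⟨u, ?_⟩
      ext z
      simp only [f, mem_filter, mem_univ, true_and, mem_singleton]
      grind
    · refine Finset.card_eq_one.2 ⟨x, ?_⟩
      ext z
      simp only [f, mem_filter, mem_univ, true_and, mem_singleton]
      grind
    · refine Finset.card_eq_one.2 ⟨y, ?_⟩
      ext z
      simp only [f, mem_filter, mem_univ, true_and, mem_singleton]
      grind
    · have : #((O.erase x).erase y) = #O - 2 := by
        rw [card_erase_of_mem (mem_erase.2 ⟨hxy.symm, hy⟩), card_erase_of_mem hx]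
        omega
      refine Eq.trans (congrArg _ ?_) this
      ext z
      simp only [f, mem_filter, mem_univ, true_and, mem_erase]
      grind
    · have : #((G.neighborFinset x).erase u) = G.degree x - 1 := by
        rw [card_erase_of_mem (by simpa using (hu x hx).symm), card_neighborFinset_eq_degree]
      refine Eq.trans (congrArg _ ?_) this
      ext z
      have hz := hsame x z
      have hc := G.adj_comm x z
      simp only [f, mem_filter, mem_univ, true_and, mem_erase, mem_neighborFinset]
      grind
    · have : #((G.neighborFinset y).erase u) = G.degree y - 1 := by
        rw [card_erase_of_mem (by simpa using (hu y hy).symm), card_neighborFinset_eq_degree]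
      refine Eq.trans (congrArg _ ?_) this
      ext z
      have hz := hsame y z
      have hc := G.adj_comm y z
      have h1 := huniq z
      simp only [f, mem_filter, mem_univ, true_and, mem_erase, mem_neighborFinset]
      grind

theorem SimpleGraph.IsTree.sum_degree_sub_one (hG : G.IsTree) [Nontrivial V]
    (hbip : ∀ ⦃s t⦄, G.Adj s t → (s ∈ O ↔ t ∉ O)) :
    ∑ v ∈ O, (G.degree v - 1) = #Oᶜ - 1 := by
  have hpos := fun v => hG.connected.preconnected.degree_pos_of_nontrivial v
  have hb : G.IsBipartiteWith O ↑(Oᶜ) := by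
    refine ⟨disjoint_coe.2 disjoint_compl_right, fun v w hvw => ?_⟩
    have := hbip hvw
    simp only [mem_coe, mem_compl]
    tauto
  have h1 := isBipartiteWith_sum_degrees_eq_card_edges hb
  have h2 := hG.card_edgeFinset
  have h3 : ∑ v ∈ O, (G.degree v - 1) + #O = ∑ v ∈ O, G.degree v := by
    rw [Finset.card_eq_sum_ones, ← Finset.sum_add_distrib]
    exact Finset.sum_congr rfl fun v _ => Nat.sub_add_cancel (hpos v)
  have h4 := Finset.card_add_card_compl O
  omega

theorem SimpleGraph.IsTree.hasArms (hG : G.IsTree) [Nontrivial V]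
    (hbip : ∀ ⦃s t⦄, G.Adj s t → (s ∈ O ↔ t ∉ O)) {u x y : V} (hu : u ∉ O)
    (hux : G.degree u - 1 = #O - 1) (hx : x ∈ O) (hy : y ∈ O) (hxy : x ≠ y)
    (h : (G.degree x - 1) + (G.degree y - 1) = #Oᶜ - 1) :
    HasArms G (#O - 2) (G.degree x - 1) (G.degree y - 1) := by
  have hpos := fun v => hG.connected.preconnected.degree_pos_of_nontrivial v
  have hOpos : 0 < #O := card_pos.2 ⟨x, hx⟩
  have hbip' : ∀ ⦃s t⦄, G.Adj s t → (s ∈ Oᶜ ↔ t ∉ Oᶜ) := fun s t hst => by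
    have := hbip hst
    simp only [mem_compl]
    tauto
  have hsum := hG.sum_degree_sub_one hbip
  have hsum' := hG.sum_degree_sub_one hbip'
  rw [compl_compl] at hsum'
  have hnbr : G.neighborFinset u = O := by
    refine Finset.eq_of_subset_of_card_le (fun v hv => ?_) ?_
    · have := hbip ((mem_neighborFinset _ _ _).1 hv)
      tauto
    · rw [card_neighborFinset_eq_degree]
      have := hpos u
      omega
  refine hasArms_of_forall_adj hbip hu (fun o ho => ?_) hx hy hxy (fun s hs hsu => ?_)
    fun o ho hox hoy => ?_
  · rwa [← mem_neighborFinset, hnbr]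
  · have := add_le_of_sum_eq hsum' (mem_compl.2 hs) (mem_compl.2 hu) hsu
    have := hpos s
    omega
  · have := eq_zero_of_sum_eq_add hsum hx hy hxy h ho hox hoy
    have := hpos o
    omega

end Tree

theorem SLt.of_sum_degree_sq_lt {V : Type*} [Fintype V] [DecidableEq V] {G H : SimpleGraph V}
    [DecidableRel G.Adj] [DecidableRel H.Adj] {a b c : ℕ} (hV : 5 ≤ Fintype.card V)
    (hG : G.IsAcyclic) {s : Set V} (hs : ∀ x y, G.Adj x y → (x ∈ s ↔ y ∉ s))
    (hH : HasArms H a b c) (hdeg : ∑ v, G.degree v = ∑ v, H.degree v)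
    (hlt : ∑ v, G.degree v ^ 2 < ∑ v, H.degree v ^ 2) : SLt G H := by
  refine ⟨4, by omega, by omega, fun i hi => ?_, ?_⟩
  · interval_cases i
    · rw [spectralMoment_zero, spectralMoment_zero]
    · rw [spectralMoment_one, spectralMoment_one]
    · rw [spectralMoment_two, spectralMoment_two, hdeg]
    · rw [spectralMoment_three G (· ∈ s) hs, hH.spectralMoment_three]
  · have h1 := hG.spectralMoment_four_add
    have h2 := two_mul_sum_degree_sq_le H
    have h3 : ((2 * ∑ v, G.degree v ^ 2 : ℕ) : ℝ) < (2 * ∑ v, H.degree v ^ 2 : ℕ) := by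
      exact_mod_cast Nat.mul_lt_mul_of_pos_left hlt two_pos
    rw [hdeg] at h1
    linarith

/-- For `4 ≤ p < q`, `n = p + q` and `2p = q + 4`, every tree
`T ∈ 𝒯_n^{p,q}` isomorphic to none of `B_{p,q}^{0,0}`, `B_{p,q}^{0,1}`,
`B_{p,q}^{2,0}`, `D_{p,q}^{0,1}` satisfies `T ≺_s D_{p,q}^{0,1}`: in this case
`D_{p,q}^{0,1}` is the unique fourth last tree in the S-order among `𝒯_n^{p,q}`. -/
theorem stmt_8 (p q : ℕ) (hp : 4 ≤ p) (hpq : p < q) (h : 2 * p = q + 4)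
    (T : SimpleGraph (Fin (p + q))) (hT : TreeBip p q T)
    (h0 : ¬ Nonempty (T ≃g BTree p q 0 0))
    (h1 : ¬ Nonempty (T ≃g BTree p q 0 1))
    (h2 : ¬ Nonempty (T ≃g BTree p q 2 0))
    (h3 : ¬ Nonempty (T ≃g DTree p q 0 1)) :
    SLt T (DTree p q 0 1) := by
  classical
  obtain ⟨hT, A, hA, hbip⟩ := hT
  have hbip' : ∀ ⦃x y⦄, T.Adj x y → (x ∈ Aᶜ ↔ y ∉ Aᶜ) := fun x y hxy => by
    have := hbip hxy
    simp only [mem_compl]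
    tauto
  have hAc : #Aᶜ = q := by
    rw [card_compl, hA, Fintype.card_fin, Nat.add_sub_cancel_left]
  have : Nontrivial (Fin (p + q)) := Fin.nontrivial_iff_two_le.2 (by omega)
  have hsA := hT.sum_degree_sub_one hbip
  have hsB := hT.sum_degree_sub_one hbip'
  have hsq := hT.sum_degree_sq
  have hedge := T.sum_degrees_eq_twice_card_edges
  have htree := hT.card_edgeFinset
  rw [compl_compl, hA] at hsB
  rw [hAc] at hsA
  rw [Fintype.card_fin] at hsq htree
  have hD := hasArms_DTree_zero_one (p := p) (q := q) (by omega) (by omega)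
  have hDdeg := hD.sum_comp_degree id
  have hDsq := hD.sum_comp_degree (· ^ 2)
  simp only [id_eq, one_pow, mul_one] at hDdeg hDsq
  rw [← Finset.sum_add_sum_compl A (fun v => (T.degree v - 1) ^ 2)] at hsq
  have hmain : ∑ v ∈ A, (T.degree v - 1) ^ 2 + ∑ v ∈ Aᶜ, (T.degree v - 1) ^ 2 <
      (q - 2) ^ 2 + 1 + (p - 1) ^ 2 := by
    by_cases hu : ∃ u ∈ A, T.degree u - 1 = q - 1
    · obtain ⟨u, huA, hu⟩ := hu
      have harms := fun x hx y hy hxy => hT.hasArms hbip' (u := u) (x := x) (y := y)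
        (by simpa using huA) (by rw [hu, hAc]) hx hy hxy
      rw [compl_compl, hA, hAc] at harms
      have hSA := sum_sq_le_mul_of_le hsA fun v hv =>
        hsA ▸ Finset.single_le_sum (f := fun v => T.degree v - 1) (fun _ _ => Nat.zero_le _) hv
      have hSB := sum_sq_lt_of_forall_pair_ne (by omega) hsB (fun x hx hxe => ?_)
        (fun x hx hxe => ?_) fun x hx y hy hxy hxe hye => ?_
      · obtain ⟨r, rfl⟩ := Nat.exists_eq_add_of_le' hp
        obtain rfl : q = 2 * r + 4 := by omega
        simp only [Nat.reduceSubDiff, Nat.add_one_sub_one] at *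
        nlinarith
      · obtain ⟨y, hy, hyx⟩ := Finset.exists_mem_ne (s := Aᶜ) (by omega) x
        have hle := add_le_of_sum_eq hsB hx hy hyx.symm
        have hye : T.degree y - 1 = 0 := by omega
        have := harms x hx y hy hyx.symm (by omega)
        rw [hxe, hye] at this
        exact h0 (this.nonempty_iso (hasArms_BTree_zero_zero (by omega) (by omega)))
      · obtain ⟨y, hy, hyx, hypos⟩ := exists_ne_pos_of_lt hsB hx (by omega)
        have hle := add_le_of_sum_eq hsB hx hy hyx.symm
        have hye : T.degree y - 1 = 1 := by omega
        have := harms x hx y hy hyx.symm (by omega)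
        rw [hxe, hye] at this
        exact h1 (this.nonempty_iso (hasArms_BTree_zero_one (by omega) (by omega)))
      · have := harms x hx y hy hxy (by omega)
        rw [hxe, hye] at this
        exact h2 (this.nonempty_iso (hasArms_BTree_two_zero (by omega) (by omega)))
    · push Not at hu
      by_cases hv : ∃ v ∈ Aᶜ, T.degree v - 1 = p - 1
      · obtain ⟨v, hvA, hv⟩ := hv
        have hSB := sum_sq_le_mul_of_le hsB fun v hv =>
          hsB ▸ Finset.single_le_sum (f := fun v => T.degree v - 1) (fun _ _ => Nat.zero_le _) hv
        have hSA := sum_sq_lt_of_forall_ne hsA (by omega) hu fun x hx hxe => ?_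
        · rw [← pow_two] at hSB
          exact Nat.add_lt_add_of_lt_of_le hSA hSB
        · obtain ⟨y, hy, hyx, hypos⟩ := exists_ne_pos_of_lt hsA hx (by omega)
          have hle := add_le_of_sum_eq hsA hx hy hyx.symm
          have hye : T.degree y - 1 = 1 := by omega
          have := hT.hasArms hbip (mem_compl.1 hvA) (by rw [hv, hA]) hx hy hyx.symm
            (by omega)
          rw [hxe, hye, hA] at this
          exact h3 (this.nonempty_iso hD)
      · push Not at hv
        have hSA := sum_sq_le_of_forall_ne (by omega) hsA hu
        have hSB := sum_sq_le_of_forall_ne (by omega) hsB hv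
        obtain ⟨r, rfl⟩ := Nat.exists_eq_add_of_le' hp
        simp only [Nat.reduceSubDiff, Nat.sub_sub, Nat.reduceAdd] at *
        nlinarith
  refine SLt.of_sum_degree_sq_lt (s := A) (by simp; omega) hT.isAcyclic
    (fun x y hxy => by simpa using hbip hxy) hD (by omega) ?_
  obtain ⟨r, rfl⟩ := Nat.exists_eq_add_of_le' hp
  obtain rfl : q = 2 * r + 4 := by omega
  rw [hDsq]
  have h4 : ∑ v, T.degree v = 2 * (r + 4 + (2 * r + 4) - 1) := by omega
  rw [h4] at hsq
  simp only [Nat.reduceSubDiff, show r + 4 + (2 * r + 4) - 1 = 3 * r + 7 by omega] at *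
  nlinarith
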